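/- arXiv:1906.03429 — 2 statements merged into one kernel-verified Lean document; each statement's English description precedes it below -/
import Mathlib

section
/- Let m, n ≥ 1, let θ, τ be permutations of {1,…,n}, let θ₁,…,θ_n, τ₁,…,τ_n be permutations of {1,…,m}, and let a₁,…,a_n, b₁,…,b_n ∈ ℂ. Let M be the complex matrix indexed by pairs in {1,…,n}×{1,…,m} with M_{(i,p),(j,q)} = a_i·[j = θ(i)]·[p = θ_i(q)] + b_i·[j = τ(i)]·[p = τ_i(q)] (where [·] is 1 if the condition holds and 0 otherwise). Let α and β be the permutations of {1,…,n}×{1,…,m} defined by α(θ(i), q) = (i, θ_i(q)) and β(τ(i), q) = (i, τ_i(q)) for all i, q. Then for every subgroup G of the group of permutations of {1,…,n}×{1,…,m} and every function χ : G → ℂ, d_χ^G(M) = Σ_{σ ∈ X(α,β) ∩ G} χ(σ⁻¹) · ∏_{y : α(y) = β(y)} (a_{c(y)} + b_{c(y)}) · ∏_{y : σ(y) = α(y) ≠ β(y)} a_{c(y)} · ∏_{y : σ(y) = β(y) ≠ α(y)} b_{d(y)}, where c(y) denotes the first coordinate of α(y) and d(y) denotes the first coordinate of β(y). -/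
open Finset

/-!
Replacing `σ` by `σ⁻¹` turns `∏ y, M y (σ y)` into `∏ y, M (σ y) y`, which picks one entry from each
column. Since `θ` and `τ` are bijective, column `y` of `M` is supported on the two rows `α y` and
`β y`, where it carries `a` and `b`, or `a + b` if the rows coincide. So only `σ` in `X(α, β)`
contribute, and their products split according to which of the rows `σ` selects.
-/

section GenMatrixFn

variable {Ω R : Type*} [Fintype Ω] [CommSemiring R]

/-- The generalized matrix function `d_χ^G(A)` of a square matrix `A`, for a subgroup `G` of the
permutations of the index set and an arbitrary weight `χ` on `G` (not assumed to be a character). -/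
def genMatrixFn (G : Subgroup (Equiv.Perm Ω)) [Fintype G] (χ : G → R) (A : Matrix Ω Ω R) : R :=
  ∑ σ : G, χ σ * ∏ y, A y ((σ : Equiv.Perm Ω) y)

theorem genMatrixFn_eq_sum_inv (G : Subgroup (Equiv.Perm Ω)) [Fintype G] (χ : G → R)
    (A : Matrix Ω Ω R) :
    genMatrixFn G χ A = ∑ σ : G, χ σ⁻¹ * ∏ y, A ((σ : Equiv.Perm Ω) y) y := by
  rw [genMatrixFn, ← Equiv.sum_comp (Equiv.inv G)]
  refine sum_congr rfl fun σ _ => ?_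
  rw [Equiv.inv_apply, ← Equiv.prod_comp (σ : Equiv.Perm Ω)]
  simp

end GenMatrixFn

section TwoEntryMatrix

variable {ι κ R : Type*} [DecidableEq ι]

/-- The matrix whose column `y` is supported on the rows `f y` and `g y`, with entries `u y` and
`v y` respectively; they are added when `f y = g y`. If `f` and `g` are permutations, this is a sum
of two monomial matrices. -/
def twoEntryMatrix [AddZeroClass R] (f g : κ → ι) (u v : κ → R) : Matrix ι κ R :=
  Matrix.of fun x y => (if x = f y then u y else 0) + (if x = g y then v y else 0)

theorem twoEntryMatrix_apply [AddZeroClass R] (f g : κ → ι) (u v : κ → R) (x : ι) (y : κ) :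
    twoEntryMatrix f g u v x y =
      (if x = f y then u y else 0) + (if x = g y then v y else 0) :=
  rfl

theorem twoEntryMatrix_apply_of_ne [AddZeroClass R] {f g : κ → ι} (u v : κ → R) {x : ι} {y : κ}
    (hf : x ≠ f y) (hg : x ≠ g y) : twoEntryMatrix f g u v x y = 0 := by
  simp [twoEntryMatrix_apply, hf, hg]

theorem twoEntryMatrix_apply_eq_mul [NonAssocSemiring R] {f g : κ → ι} (u v : κ → R) {x : ι}
    {y : κ} (h : x = f y ∨ x = g y) :
    twoEntryMatrix f g u v x y =
      (if f y = g y then u y + v y else 1) * (if x = f y ∧ f y ≠ g y then u y else 1) *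
        (if x = g y ∧ g y ≠ f y then v y else 1) := by
  by_cases hfg : f y = g y
  · have hg : x = g y := h.elim (·.trans hfg) id
    simp [twoEntryMatrix_apply, hfg, hg]
  · rcases h with rfl | rfl
    · simp [twoEntryMatrix_apply, hfg]
    · simp [twoEntryMatrix_apply, hfg, Ne.symm hfg]

variable [Fintype κ] [CommSemiring R]

theorem prod_twoEntryMatrix_eq_zero {f g s : κ → ι} (u v : κ → R)
    (hs : ¬ ∀ y, s y = f y ∨ s y = g y) : ∏ y, twoEntryMatrix f g u v (s y) y = 0 := by
  push Not at hs
  obtain ⟨y, hf, hg⟩ := hs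
  exact prod_eq_zero (mem_univ y) (twoEntryMatrix_apply_of_ne u v hf hg)

theorem prod_twoEntryMatrix_eq_mul {f g s : κ → ι} (u v : κ → R)
    (hs : ∀ y, s y = f y ∨ s y = g y) :
    ∏ y, twoEntryMatrix f g u v (s y) y =
      (∏ y with f y = g y, (u y + v y)) * (∏ y with s y = f y ∧ f y ≠ g y, u y) *
        ∏ y with s y = g y ∧ g y ≠ f y, v y := by
  simp only [prod_filter, ← prod_mul_distrib]
  exact prod_congr rfl fun y _ => twoEntryMatrix_apply_eq_mul u v (hs y)

end TwoEntryMatrix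

theorem genMatrixFn_twoEntryMatrix {Ω R : Type*} [Fintype Ω] [DecidableEq Ω] [CommSemiring R]
    (G : Subgroup (Equiv.Perm Ω)) [Fintype G] (χ : G → R) (f g : Ω → Ω) (u v : Ω → R) :
    genMatrixFn G χ (twoEntryMatrix f g u v) =
      ∑ σ : G with ∀ y, σ.1 y = f y ∨ σ.1 y = g y,
        χ σ⁻¹ * (∏ y with f y = g y, (u y + v y)) *
          (∏ y with σ.1 y = f y ∧ f y ≠ g y, u y) *
          ∏ y with σ.1 y = g y ∧ g y ≠ f y, v y := by
  rw [genMatrixFn_eq_sum_inv, sum_filter]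
  refine sum_congr rfl fun σ _ => ?_
  split_ifs with hσ
  · rw [prod_twoEntryMatrix_eq_mul u v hσ]
    simp only [mul_assoc]
  · rw [prod_twoEntryMatrix_eq_zero u v hσ, mul_zero]

section Block

variable {ι κ R : Type*} [DecidableEq ι] [DecidableEq κ]

theorem block_apply_eq_ite [MulZeroOneClass R] (θ : Equiv.Perm ι) (θb : ι → κ → κ) (a : ι → R)
    {α : ι × κ → ι × κ} (hα : ∀ i q, α (θ i, q) = (i, θb i q)) (x y : ι × κ) :
    a x.1 * (if y.1 = θ x.1 then 1 else 0) * (if x.2 = θb x.1 y.2 then 1 else 0) =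
      if x = α y then a (α y).1 else 0 := by
  obtain ⟨i, p⟩ := x
  obtain ⟨j, q⟩ := y
  obtain ⟨k, rfl⟩ := θ.surjective j
  rw [hα]
  by_cases hik : i = k
  · subst hik
    simp
  · simp [hik, Ne.symm hik]

theorem eq_twoEntryMatrix_of_block [NonAssocSemiring R] (θ τ : Equiv.Perm ι)
    (θb τb : ι → κ → κ) (a b : ι → R) {M : Matrix (ι × κ) (ι × κ) R}
    (hM : ∀ i p j q, M (i, p) (j, q) =
      a i * (if j = θ i then 1 else 0) * (if p = θb i q then 1 else 0) +
        b i * (if j = τ i then 1 else 0) * (if p = τb i q then 1 else 0))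
    {α β : ι × κ → ι × κ} (hα : ∀ i q, α (θ i, q) = (i, θb i q))
    (hβ : ∀ i q, β (τ i, q) = (i, τb i q)) :
    M = twoEntryMatrix α β (fun y => a (α y).1) (fun y => b (β y).1) := by
  ext x y
  rw [hM, block_apply_eq_ite θ θb a hα, block_apply_eq_ite τ τb b hβ, twoEntryMatrix_apply]

theorem genMatrixFn_stmt14_general [Fintype ι] [Fintype κ] [CommSemiring R]
    (θ τ : Equiv.Perm ι) (θb τb : ι → κ → κ) (a b : ι → R) (M : Matrix (ι × κ) (ι × κ) R)
    (hM : ∀ i p j q, M (i, p) (j, q) =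
      a i * (if j = θ i then 1 else 0) * (if p = θb i q then 1 else 0) +
        b i * (if j = τ i then 1 else 0) * (if p = τb i q then 1 else 0))
    (α β : ι × κ → ι × κ) (hα : ∀ i q, α (θ i, q) = (i, θb i q))
    (hβ : ∀ i q, β (τ i, q) = (i, τb i q))
    (G : Subgroup (Equiv.Perm (ι × κ))) [Fintype G] (χ : G → R) :
    genMatrixFn G χ M =
      ∑ σ : G with ∀ y, σ.1 y = α y ∨ σ.1 y = β y,
        χ σ⁻¹ * (∏ y with α y = β y, (a (α y).1 + b (α y).1)) *
          (∏ y with σ.1 y = α y ∧ α y ≠ β y, a (α y).1) *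
          ∏ y with σ.1 y = β y ∧ β y ≠ α y, b (β y).1 := by
  have hdiag : ∏ y with α y = β y, (a (α y).1 + b (β y).1) =
      ∏ y with α y = β y, (a (α y).1 + b (α y).1) :=
    prod_congr rfl fun y hy => by rw [(mem_filter.mp hy).2]
  rw [eq_twoEntryMatrix_of_block θ τ θb τb a b hM hα hβ, genMatrixFn_twoEntryMatrix, hdiag]

end Block

/-- Generalized matrix function of the block matrix `M` built from
permutations `θ, τ` of `[n]`, permutations `θᵢ, τᵢ` of `[m]` and scalars `aᵢ, bᵢ`:
for every subgroup `G` of the permutations of `[n]×[m]` and every `χ : G → ℂ`,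
`d_χ^G(M) = Σ_{σ ∈ X(α,β) ∩ G} χ(σ⁻¹) ∏_{α(y)=β(y)} (a_{c(y)} + b_{c(y)})
 ∏_{σ(y)=α(y)≠β(y)} a_{c(y)} ∏_{σ(y)=β(y)≠α(y)} b_{d(y)}`,
where `c(y) = (α(y)).1` and `d(y) = (β(y)).1`. -/
theorem genMatrixFn_stmt14 (m n : ℕ) (hm : 1 ≤ m) (hn : 1 ≤ n)
    (θ τ : Equiv.Perm (Fin n)) (θb τb : Fin n → Equiv.Perm (Fin m))
    (a b : Fin n → ℂ)
    (M : Matrix (Fin n × Fin m) (Fin n × Fin m) ℂ)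
    (hM : ∀ i p j q, M (i, p) (j, q) =
      a i * (if j = θ i then 1 else 0) * (if p = θb i q then 1 else 0) +
        b i * (if j = τ i then 1 else 0) * (if p = τb i q then 1 else 0))
    (α β : Equiv.Perm (Fin n × Fin m))
    (hα : ∀ i q, α (θ i, q) = (i, θb i q))
    (hβ : ∀ i q, β (τ i, q) = (i, τb i q))
    (G : Subgroup (Equiv.Perm (Fin n × Fin m))) [Fintype G] (χ : G → ℂ) :
    ∑ σ : G, χ σ * ∏ y, M y ((σ : Equiv.Perm (Fin n × Fin m)) y) =
      ∑ σ ∈ Finset.univ.filter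
          (fun σ : G => ∀ y, (σ : Equiv.Perm (Fin n × Fin m)) y = α y ∨
            (σ : Equiv.Perm (Fin n × Fin m)) y = β y),
        χ σ⁻¹ *
          (∏ y ∈ Finset.univ.filter (fun y => α y = β y), (a (α y).1 + b (α y).1)) *
          (∏ y ∈ Finset.univ.filter
              (fun y => (σ : Equiv.Perm (Fin n × Fin m)) y = α y ∧ α y ≠ β y),
            a (α y).1) *
          (∏ y ∈ Finset.univ.filter
              (fun y => (σ : Equiv.Perm (Fin n × Fin m)) y = β y ∧ β y ≠ α y),
            b (β y).1) :=
  genMatrixFn_stmt14_general θ τ (fun i => θb i) (fun i => τb i) a b M hM α β hα hβ G χ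
end

section
/- Let n ≥ 1, let θ be a permutation of {1,…,n}, let F be the number of fixed points of θ, and let t be the number of 2-cycles (transpositions) in the disjoint cycle decomposition of θ. Then for every subgroup G of S_n and every function χ : G → ℂ, d_χ^G(P_θ + P_{θ⁻¹}) = 2^{F + 2t} · d_χ^G(S_θ). -/
open Finset

/-- The permutation matrix of `θ`: `(P_θ)_{i,j} = 1` if `i = θ(j)`, else `0`. -/
noncomputable def permMat {n : ℕ} (θ : Equiv.Perm (Fin n)) : Matrix (Fin n) (Fin n) ℂ :=
  Matrix.of fun i j => if i = θ j then 1 else 0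

/-- The symmetric matrix `S_θ`: `(S_θ)_{i,j} = 1` if `θ(i) = j` or `θ⁻¹(i) = j`, else `0`. -/
noncomputable def symMat {n : ℕ} (θ : Equiv.Perm (Fin n)) : Matrix (Fin n) (Fin n) ℂ :=
  Matrix.of fun i j => if θ i = j ∨ θ⁻¹ i = j then 1 else 0

/-!
The entry of `P_θ + P_{θ⁻¹}` at `(i, j)` is that of `S_θ`, except that the two permutation matrices
overlap in the rows with `θ² i = i`, where it is twice as large. A diagonal product `∏ i, A i (σ i)`
takes one entry from each row, so the two products differ by the factor `2 ^ #{i | θ² i = i}` for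
every `σ`. Finally, `θ² i = i` holds exactly when `i` is a fixed point or lies on a `2`-cycle.
-/

section CycleCounting

variable {α : Type*}

theorem pow_apply_eq_self_iff_orderOf_cycleOf_dvd [Finite α] (θ : Equiv.Perm α)
    [DecidableRel θ.SameCycle] (k : ℕ) (i : α) : (θ ^ k) i = i ↔ orderOf (θ.cycleOf i) ∣ k := by
  rw [orderOf_dvd_iff_pow_eq_one, ← Equiv.Perm.cycleOf_pow_apply_self]
  by_cases hi : θ i = i
  · simp [(Equiv.Perm.cycleOf_eq_one_iff θ).2 hi]
  · have hcycle := θ.isCycle_cycleOf hi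
    have hmoves : θ.cycleOf i i ≠ i := by rwa [Equiv.Perm.cycleOf_apply_self]
    exact (hcycle.pow_eq_one_iff' hmoves).symm

variable [Fintype α] [DecidableEq α]

theorem pow_prime_apply_eq_self_iff {p : ℕ} (hp : p.Prime) (θ : Equiv.Perm α) (i : α) :
    (θ ^ p) i = i ↔ θ i = i ∨ #(θ.cycleOf i).support = p := by
  rw [pow_apply_eq_self_iff_orderOf_cycleOf_dvd, Nat.dvd_prime hp, orderOf_eq_one_iff,
    Equiv.Perm.cycleOf_eq_one_iff]
  refine or_congr_right' fun hi => ?_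
  rw [(θ.isCycle_cycleOf hi).orderOf]

theorem card_filter_card_support_cycleOf_eq {k : ℕ} (hk : k ≠ 0) (θ : Equiv.Perm α) :
    #{i | #(θ.cycleOf i).support = k} = k * #{c ∈ θ.cycleFactorsFinset | #c.support = k} := by
  have hmaps : ∀ i ∈ ({i | #(θ.cycleOf i).support = k} : Finset α),
      θ.cycleOf i ∈ {c ∈ θ.cycleFactorsFinset | #c.support = k} := by
    intro i hi
    rw [mem_filter_univ] at hi
    have hne : θ.cycleOf i ≠ 1 := by
      intro h
      exact hk (by rw [← hi, h, Equiv.Perm.support_one, card_empty])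
    exact mem_filter.2 ⟨Equiv.Perm.cycleOf_ne_one_iff_mem_cycleFactorsFinset.1 hne, hi⟩
  have hfiber : ∀ c ∈ {c ∈ θ.cycleFactorsFinset | #c.support = k},
      #{i ∈ ({i | #(θ.cycleOf i).support = k} : Finset α) | θ.cycleOf i = c} = k := by
    intro c hc
    obtain ⟨hcθ, hck⟩ := mem_filter.1 hc
    rw [← hck]
    congr 1
    ext i
    rw [mem_filter, mem_filter_univ, ← Equiv.Perm.eq_cycleOf_of_mem_cycleFactorsFinset_iff θ c hcθ]
    exact ⟨fun h => h.2.symm, fun h => ⟨by rw [← h], h.symm⟩⟩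
  rw [card_eq_sum_card_fiberwise hmaps, sum_const_nat hfiber, mul_comm]

theorem card_filter_pow_prime_apply_eq_self {p : ℕ} (hp : p.Prime) (θ : Equiv.Perm α) :
    #{i | (θ ^ p) i = i} =
      #{i | θ i = i} + p * #{c ∈ θ.cycleFactorsFinset | #c.support = p} := by
  have hdisj : Disjoint ({i | θ i = i} : Finset α)
      ({i | #(θ.cycleOf i).support = p} : Finset α) := by
    refine disjoint_filter.2 fun i _ hi hcard => hp.ne_zero ?_
    rw [← hcard, (Equiv.Perm.cycleOf_eq_one_iff θ).2 hi, Equiv.Perm.support_one, card_empty]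
  simp only [pow_prime_apply_eq_self_iff hp]
  rw [filter_or, card_union_of_disjoint hdisj, card_filter_card_support_cycleOf_eq hp.ne_zero]

end CycleCounting

section SymPermMatrix

variable {α : Type*} [DecidableEq α]

/-- The matrix `S_θ` over an arbitrary index type and arbitrary coefficients: the `0`-`1` matrix
whose support is the union of the supports of the permutation matrices of `θ` and `θ⁻¹`. -/
def symPermMatrix (R : Type*) [Zero R] [One R] (θ : Equiv.Perm α) : Matrix α α R :=
  Matrix.of fun i j => if θ i = j ∨ θ⁻¹ i = j then 1 else 0

theorem permMatrix_apply_eq_ite {R : Type*} [Zero R] [One R] (θ : Equiv.Perm α) (i j : α) :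
    θ.permMatrix R i j = if θ i = j then 1 else 0 := by
  simp only [PEquiv.toMatrix_apply, Equiv.toPEquiv_apply, Option.mem_some_iff]

theorem permMatrix_add_permMatrix_inv_apply {R : Type*} [NonAssocSemiring R] (θ : Equiv.Perm α)
    (i j : α) :
    (θ.permMatrix R + θ⁻¹.permMatrix R) i j =
      (if (θ ^ 2) i = i then 2 else 1) * symPermMatrix R θ i j := by
  have hsq : (θ ^ 2) i = i ↔ θ i = θ⁻¹ i := by
    rw [sq, Equiv.Perm.mul_apply, Equiv.Perm.eq_inv_iff_eq]
  simp only [symPermMatrix, Matrix.add_apply, permMatrix_apply_eq_ite, Matrix.of_apply, hsq]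
  by_cases hj : θ i = j
  · subst hj
    by_cases hinv : θ⁻¹ i = θ i
    · simp only [hinv, or_self, if_true, mul_one, one_add_one_eq_two]
    · simp only [hinv, Ne.symm hinv, or_false, if_true, if_false, mul_one, add_zero]
  · by_cases hinv : θ⁻¹ i = j
    · subst hinv
      simp only [hj, or_true, if_true, if_false, mul_one, zero_add]
    · simp only [hj, hinv, or_self, if_false, mul_zero, add_zero]

variable [Fintype α]

theorem prod_permMatrix_add_permMatrix_inv_apply {R : Type*} [CommSemiring R] (θ : Equiv.Perm α)
    (σ : α → α) :
    ∏ i, (θ.permMatrix R + θ⁻¹.permMatrix R) i (σ i) =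
      2 ^ #{i | (θ ^ 2) i = i} * ∏ i, symPermMatrix R θ i (σ i) := by
  simp only [permMatrix_add_permMatrix_inv_apply, prod_mul_distrib, prod_ite, prod_const, one_pow,
    mul_one]

theorem genMatrixFn_stmt15_general {R ι : Type*} [CommSemiring R] [Fintype ι] (θ : Equiv.Perm α)
    (σ : ι → α → α) (χ : ι → R) :
    ∑ g, χ g * ∏ i, (θ.permMatrix R + θ⁻¹.permMatrix R) i (σ g i) =
      2 ^ (#{i | θ i = i} + 2 * #{c ∈ θ.cycleFactorsFinset | #c.support = 2}) *
        ∑ g, χ g * ∏ i, symPermMatrix R θ i (σ g i) := by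
  simp only [prod_permMatrix_add_permMatrix_inv_apply,
    card_filter_pow_prime_apply_eq_self Nat.prime_two, mul_sum, mul_left_comm]

end SymPermMatrix

theorem permMat_eq_permMatrix_inv {n : ℕ} (θ : Equiv.Perm (Fin n)) :
    permMat θ = θ⁻¹.permMatrix ℂ := by
  ext i j
  simp only [permMat, Matrix.of_apply, permMatrix_apply_eq_ite, Equiv.Perm.inv_eq_iff_eq]

theorem permMat_add_permMat_inv {n : ℕ} (θ : Equiv.Perm (Fin n)) :
    permMat θ + permMat θ⁻¹ = θ.permMatrix ℂ + θ⁻¹.permMatrix ℂ := by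
  rw [permMat_eq_permMatrix_inv, permMat_eq_permMatrix_inv, inv_inv, add_comm]

theorem symMat_eq_symPermMatrix {n : ℕ} (θ : Equiv.Perm (Fin n)) :
    symMat θ = symPermMatrix ℂ θ :=
  rfl

/-- With `F` the number of fixed points of `θ` and `t` the number of
transpositions in the disjoint cycle decomposition of `θ`,
`d_χ^G(P_θ + P_{θ⁻¹}) = 2^{F + 2t} · d_χ^G(S_θ)` for every subgroup `G` of `S_n` and
every function `χ : G → ℂ`. -/
theorem genMatrixFn_stmt15 (n : ℕ) (hn : 1 ≤ n) (θ : Equiv.Perm (Fin n)) (F t : ℕ)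
    (hF : F = (Finset.univ.filter fun i => θ i = i).card)
    (ht : t = (θ.cycleFactorsFinset.filter fun c => c.support.card = 2).card)
    (G : Subgroup (Equiv.Perm (Fin n))) [Fintype G] (χ : G → ℂ) :
    ∑ σ : G, χ σ * ∏ i, (permMat θ + permMat θ⁻¹) i ((σ : Equiv.Perm (Fin n)) i) =
      2 ^ (F + 2 * t) *
        ∑ σ : G, χ σ * ∏ i, symMat θ i ((σ : Equiv.Perm (Fin n)) i) := by
  rw [hF, ht, permMat_add_permMat_inv, symMat_eq_symPermMatrix]
  exact genMatrixFn_stmt15_general θ (fun σ : G => σ) χ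
end
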